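/- Let R be a ring with a central invertible element q, and let X be an n×n q-generic matrix over R. Let (i_1,…,i_n) be any tuple of elements of {1,…,n} (not necessarily distinct), and let A be the n×n matrix whose s-th row is the i_s-th row of X. Then det_q A = (−q)^{−ℓ(i_1,…,i_n)}·det_q X if i_1,…,i_n are pairwise distinct, and det_q A = 0 if some row index is repeated. Here ℓ(i_1,…,i_n) is the number of inversions of the tuple. -/

import Mathlib

/-!
Everything reduces to two neighbouring rows `s ⋖ t`. Pair each permutation `σ` satisfying
`σ s < σ t` with `σ ∘ (s t)`, which has exactly one more inversion. The two summands of the quantum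
determinant differ only in two neighbouring factors, so their sum contains the `2 × 2` quantum minor
of the rows `s`, `t` and the columns `σ s < σ t`. The defining relations of a `q`-generic matrix say
that this minor vanishes if the two rows coincide and picks up the factor `(-q)⁻¹` if they come in
decreasing order.

Hence sorting a descent of the row tuple pulls out `(-q)⁻¹` and removes exactly one inversion, and a
sorted tuple with a repetition has two equal neighbours.
-/

/-- The number of inversions (the "length" `ℓ`) of a tuple. -/
def tupleInv {m : ℕ} {α : Type*} [LinearOrder α] (f : Fin m → α) : ℕ :=
  ((Finset.univ : Finset (Fin m × Fin m)).filter fun p => p.1 < p.2 ∧ f p.2 < f p.1).card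

/-- The quantum determinant `det_q A = ∑_σ (-q)^{-ℓ(σ)} a_{1,σ1} ⋯ a_{n,σn}`. -/
def qdet {R : Type*} [Ring R] {n : ℕ} (q : Rˣ) (A : Matrix (Fin n) (Fin n) R) : R :=
  ∑ σ : Equiv.Perm (Fin n),
    (((-q) ^ (-(tupleInv fun i => σ i : ℤ)) : Rˣ) : R) * (List.ofFn fun i => A i (σ i)).prod

/-- A matrix is `q`-generic if its entries satisfy the standard quantum relations. -/
def qGeneric {R : Type*} [Ring R] {n m : ℕ} (q : Rˣ) (X : Matrix (Fin n) (Fin m) R) : Prop :=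
  (∀ (k : Fin n) (i j : Fin m), i < j → X k j * X k i = (q : R) * (X k i * X k j)) ∧
  (∀ (i j : Fin n) (k : Fin m), i < j → X j k * X i k = (q : R) * (X i k * X j k)) ∧
  (∀ (i j : Fin n) (k l : Fin m), i < j → k < l → X j k * X i l = X i l * X j k) ∧
  (∀ (i j : Fin n) (k l : Fin m), i < j → k < l →
    X j l * X i k = X i k * X j l + ((q : R) - ((q⁻¹ : Rˣ) : R)) * (X i l * X j k))

open Equiv Function

section Inversions

variable {n : ℕ} {α : Type*} [LinearOrder α]

lemma swap_lt_swap_iff_of_covBy {s t x y : α} (hst : s ⋖ t) (hxy : ¬(x = s ∧ y = t))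
    (hyx : ¬(x = t ∧ y = s)) : swap s t x < swap s t y ↔ x < y := by
  have lt_t_iff {z : α} : z < t ↔ z ≤ s := hst.lt_iff_le_left
  have s_lt_iff {z : α} : s < z ↔ t ≤ z := hst.lt_iff_le_right
  have := hst.lt
  simp only [swap_apply_def]
  grind

lemma tupleInv_comp_swap {f : Fin n → α} {s t : Fin n} (hst : s ⋖ t) (h : f s < f t) :
    tupleInv (f ∘ swap s t) = tupleInv f + 1 := by
  classical
  have inversions_comp_swap :
      (Finset.univ : Finset (Fin n × Fin n)).filter
          (fun p => p.1 < p.2 ∧ (f ∘ swap s t) p.2 < (f ∘ swap s t) p.1) =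
        insert (s, t) (((Finset.univ : Finset (Fin n × Fin n)).filter
          fun p => p.1 < p.2 ∧ f p.2 < f p.1).map
            (prodCongr (swap s t) (swap s t)).toEmbedding) := by
    ext ⟨x, y⟩
    simp only [Finset.mem_insert, Finset.mem_map_equiv, Finset.mem_filter, Finset.mem_univ,
      true_and, prodCongr_symm, prodCongr_apply, Prod.map_apply, symm_swap, Prod.mk.injEq,
      comp_apply]
    by_cases hxy : x = s ∧ y = t
    · simp [hxy, h, hst.lt]
    by_cases hyx : x = t ∧ y = s
    · simp [hyx, h.not_gt, hst.lt.not_gt, hst.lt.ne']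
    · simp only [hxy, false_or, swap_lt_swap_iff_of_covBy hst hxy hyx]
  rw [tupleInv, inversions_comp_swap, Finset.card_insert_of_notMem, Finset.card_map, tupleInv]
  simp [Finset.mem_map_equiv, hst.lt.not_gt]

lemma tupleInv_eq_zero_of_monotone {f : Fin n → α} (hf : Monotone f) : tupleInv f = 0 := by
  simp only [tupleInv, Finset.card_eq_zero, Finset.filter_eq_empty_iff, not_and, not_lt]
  exact fun p _ hp => hf hp.le

end Inversions

lemma comp_sort_eq_id_of_injective {n : ℕ} {i : Fin n → Fin n} (hi : Injective i) :
    i ∘ Tuple.sort i = id := by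
  let σ : Perm (Fin n) := .ofBijective i (Finite.injective_iff_bijective.1 hi)
  have hσ : i ∘ σ.symm = id := σ.self_comp_symm
  rw [← Tuple.comp_sort_eq_comp_iff_monotone.2 (hσ ▸ monotone_id), hσ]

lemma exists_prod_ofFn_eq_mul_mul {M : Type*} [Monoid M] {n : ℕ} (g : Fin n → M) {s t : Fin n}
    (hst : s ⋖ t) :
    ∃ P S : M, (∀ z, (∀ x, Commute z (g x)) → Commute z P) ∧
      ∀ h : Fin n → M, (∀ x, x ≠ s → x ≠ t → h x = g x) →
        (List.ofFn h).prod = P * (h s * h t) * S := by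
  have hval : s.val + 1 = t.val := Nat.covBy_iff_add_one_eq.1 (Fin.covBy_iff.1 hst)
  refine ⟨((List.ofFn g).take s).prod, ((List.ofFn g).drop (t + 1)).prod,
    fun z hz => Commute.list_prod_right _ _ fun x hx => ?_, fun h hhg => ?_⟩
  · obtain ⟨k, rfl⟩ := List.mem_ofFn.1 (List.mem_of_mem_take hx)
    exact hz k
  have take_eq : (List.ofFn h).take s = (List.ofFn g).take s := by
    refine List.ext_getElem (by simp) fun k hk _ => ?_
    simp only [List.length_take, List.length_ofFn] at hk
    simp only [List.getElem_take, List.getElem_ofFn]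
    exact hhg _ (by grind) (by grind)
  have drop_eq : (List.ofFn h).drop (t + 1) = (List.ofFn g).drop (t + 1) := by
    refine List.ext_getElem (by simp) fun k _ _ => ?_
    simp only [List.getElem_drop, List.getElem_ofFn]
    exact hhg _ (by grind) (by grind)
  have drop_s : (List.ofFn h).drop s = h s :: h t :: (List.ofFn h).drop (t + 1) := by
    rw [List.drop_eq_getElem_cons (by simp), List.getElem_ofFn, hval,
      List.drop_eq_getElem_cons (by simp), List.getElem_ofFn]
  rw [← List.take_append_drop s (List.ofFn h), drop_s, take_eq, drop_eq]
  simp only [List.prod_append, List.prod_cons, mul_assoc]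

lemma sum_perm_eq_sum_add_mul_swap {α M : Type*} [Fintype α] [LinearOrder α] [AddCommMonoid M]
    (f : Perm α → M) {s t : α} (hst : s ≠ t) :
    ∑ σ, f σ = ∑ σ with σ s < σ t, (f σ + f (σ * swap s t)) := by
  have sum_descents : ∑ σ with ¬σ s < σ t, f σ = ∑ σ with σ s < σ t, f (σ * swap s t) := by
    refine (Finset.sum_equiv (Equiv.mulRight (swap s t)) (fun σ => ?_) fun σ _ => rfl).symm
    simp [le_iff_lt_or_eq, hst.symm]
  rw [Finset.sum_add_distrib, ← sum_descents, Finset.sum_filter_add_sum_filter_not]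

section QuantumMinor

variable {R : Type*} [Ring R]

/-- The `2 × 2` quantum minor of `X` on the rows `a`, `b` and the columns `k`, `l`, taken in this
order: the quantum determinant of the submatrix. The rows may repeat or decrease. -/
def qMinor {ι κ : Type*} (q : Rˣ) (X : Matrix ι κ R) (a b : ι) (k l : κ) : R :=
  X a k * X b l + (((-q)⁻¹ : Rˣ) : R) * (X a l * X b k)

variable {m n : ℕ} {q : Rˣ} {X : Matrix (Fin m) (Fin n) R}

lemma qMinor_self (hX : qGeneric q X) (a : Fin m) {k l : Fin n} (hkl : k < l) :
    qMinor q X a a k l = 0 := by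
  simp [qMinor, hX.1 a k l hkl, inv_neg]

lemma qMinor_swap (hX : qGeneric q X) {a b : Fin m} (hba : b < a) {k l : Fin n} (hkl : k < l) :
    qMinor q X a b k l = (((-q)⁻¹ : Rˣ) : R) * qMinor q X b a k l := by
  obtain ⟨-, -, antidiagonal, diagonal⟩ := hX
  simp only [qMinor, antidiagonal b a k l hba hkl, diagonal b a k l hba hkl, inv_neg,
    Units.val_neg, mul_add, sub_mul, neg_mul, mul_neg, neg_neg, mul_sub,
    Units.inv_mul_cancel_left]
  abel

end QuantumMinor

section QuantumDeterminant

variable {R : Type*} [Ring R] {q : Rˣ} {n : ℕ}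

lemma commute_neg_zpow {r : R} (h : Commute (q : R) r) (k : ℤ) :
    Commute (((-q) ^ k : Rˣ) : R) r :=
  Commute.units_zpow_left (by simpa using h.neg_left) k

lemma neg_zpow_neg_natCast_succ (q : Rˣ) (k : ℕ) :
    (((-q) ^ (-((k + 1 : ℕ) : ℤ)) : Rˣ) : R) =
      (((-q) ^ (-(k : ℤ)) : Rˣ) : R) * (((-q)⁻¹ : Rˣ) : R) := by
  rw [← Units.val_mul, ← zpow_sub_one, Nat.cast_succ, neg_add']

/-- The summand of the quantum determinant `qdet q A` at the permutation `σ`. -/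
def qdetSummand (q : Rˣ) (A : Matrix (Fin n) (Fin n) R) (σ : Perm (Fin n)) : R :=
  (((-q) ^ (-(tupleInv σ : ℤ)) : Rˣ) : R) * (List.ofFn fun x => A x (σ x)).prod

lemma exists_qdetSummand_add_eq_mul_qMinor {A : Matrix (Fin n) (Fin n) R}
    (hq : ∀ x y, Commute (q : R) (A x y)) {s t : Fin n} (hst : s ⋖ t) (σ : Perm (Fin n)) :
    ∃ P S : R, Commute (q : R) P ∧
      ∀ B : Matrix (Fin n) (Fin n) R, (∀ x, x ≠ s → x ≠ t → B x = A x) → σ s < σ t →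
        qdetSummand q B σ + qdetSummand q B (σ * swap s t) =
          P * qMinor q B s t (σ s) (σ t) * S := by
  obtain ⟨P, S, hP, hprod⟩ := exists_prod_ofFn_eq_mul_mul (fun x => A x (σ x)) hst
  have hqP : Commute (q : R) P := hP q fun x => hq x (σ x)
  have hinvP : Commute (((-q)⁻¹ : Rˣ) : R) P := by simpa using commute_neg_zpow hqP (-1)
  have hqc : Commute (q : R) (((-q) ^ (-(tupleInv σ : ℤ)) : Rˣ) : R) :=
    (commute_neg_zpow (Commute.refl _) _).symm
  refine ⟨_, S, hqc.mul_right hqP, fun B hB hσ => ?_⟩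
  have prod_σ : (List.ofFn fun x => B x (σ x)).prod =
      P * (B s (σ s) * B t (σ t)) * S :=
    hprod _ fun x hs ht => by rw [hB x hs ht]
  have prod_σ_swap : (List.ofFn fun x => B x ((σ * swap s t) x)).prod =
      P * (B s (σ t) * B t (σ s)) * S := by
    rw [hprod _ fun x hs ht => by rw [hB x hs ht, Perm.mul_apply, swap_apply_of_ne_of_ne hs ht]]
    simp only [Perm.mul_apply, swap_apply_left, swap_apply_right]
  rw [qdetSummand, qdetSummand, prod_σ, prod_σ_swap, Perm.coe_mul, tupleInv_comp_swap hst hσ,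
    neg_zpow_neg_natCast_succ, qMinor]
  simp only [mul_add, add_mul, mul_assoc, hinvP.left_comm]

/-- Matrices agreeing outside two neighbouring rows share the outer factors `P` and `S`, so their
quantum determinants can be compared minor by minor. -/
lemma exists_qdet_eq_sum_mul_qMinor {A : Matrix (Fin n) (Fin n) R}
    (hq : ∀ x y, Commute (q : R) (A x y)) {s t : Fin n} (hst : s ⋖ t) :
    ∃ P S : Perm (Fin n) → R, (∀ σ, Commute (q : R) (P σ)) ∧
      ∀ B : Matrix (Fin n) (Fin n) R, (∀ x, x ≠ s → x ≠ t → B x = A x) →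
        qdet q B = ∑ σ with σ s < σ t, P σ * qMinor q B s t (σ s) (σ t) * S σ := by
  choose P S hP hPS using exists_qdetSummand_add_eq_mul_qMinor hq hst
  refine ⟨P, S, hP, fun B hB => ?_⟩
  calc qdet q B = ∑ σ, qdetSummand q B σ := rfl
    _ = ∑ σ with σ s < σ t, (qdetSummand q B σ + qdetSummand q B (σ * swap s t)) :=
      sum_perm_eq_sum_add_mul_swap _ hst.ne
    _ = _ := Finset.sum_congr rfl fun σ hσ => hPS σ B hB (Finset.mem_filter.1 hσ).2

end QuantumDeterminant

section Rows

variable {R : Type*} [Ring R] {q : Rˣ} {m n : ℕ} {X : Matrix (Fin m) (Fin n) R}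

lemma qdet_submatrix_eq_zero_of_covBy (hq : ∀ a k, Commute (q : R) (X a k)) (hX : qGeneric q X)
    {i : Fin n → Fin m} {s t : Fin n} (hst : s ⋖ t) (h : i s = i t) :
    qdet q (X.submatrix i id) = 0 := by
  obtain ⟨P, S, -, hsum⟩ := exists_qdet_eq_sum_mul_qMinor (A := X.submatrix i id)
    (fun x y => hq (i x) y) hst
  rw [hsum _ fun _ _ _ => rfl]
  refine Finset.sum_eq_zero fun σ hσ => ?_
  have minor_eq_zero : qMinor q (X.submatrix i id) s t (σ s) (σ t) = 0 := by
    simpa only [qMinor, Matrix.submatrix_apply, id_eq, h] using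
      qMinor_self hX (i t) (Finset.mem_filter.1 hσ).2
  rw [minor_eq_zero, mul_zero, zero_mul]

lemma qdet_submatrix_comp_swap (hq : ∀ a k, Commute (q : R) (X a k)) (hX : qGeneric q X)
    {i : Fin n → Fin m} {s t : Fin n} (hst : s ⋖ t) (h : i t < i s) :
    qdet q (X.submatrix i id) =
      (((-q)⁻¹ : Rˣ) : R) * qdet q (X.submatrix (i ∘ swap s t) id) := by
  obtain ⟨P, S, hP, hsum⟩ := exists_qdet_eq_sum_mul_qMinor (A := X.submatrix i id)
    (fun x y => hq (i x) y) hst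
  rw [hsum _ fun _ _ _ => rfl, hsum (X.submatrix (i ∘ swap s t) id) fun x hs ht => by
    ext; simp [swap_apply_of_ne_of_ne hs ht], Finset.mul_sum]
  refine Finset.sum_congr rfl fun σ hσ => ?_
  have minor_eq : qMinor q (X.submatrix i id) s t (σ s) (σ t) =
      (((-q)⁻¹ : Rˣ) : R) * qMinor q (X.submatrix (i ∘ swap s t) id) s t (σ s) (σ t) := by
    simpa only [qMinor, Matrix.submatrix_apply, id_eq, comp_apply, swap_apply_left,
      swap_apply_right] using qMinor_swap hX h (Finset.mem_filter.1 hσ).2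
  have hinvP : Commute (((-q)⁻¹ : Rˣ) : R) (P σ) := by simpa using commute_neg_zpow (hP σ) (-1)
  rw [minor_eq, ← mul_assoc (P σ), ← hinvP.eq]
  simp only [mul_assoc]

lemma qdet_submatrix_eq_mul_qdet_sort (hq : ∀ a k, Commute (q : R) (X a k))
    (hX : qGeneric q X) (i : Fin n → Fin m) :
    qdet q (X.submatrix i id) =
      (((-q) ^ (-(tupleInv i : ℤ)) : Rˣ) : R) * qdet q (X.submatrix (i ∘ Tuple.sort i) id) := by
  by_cases hi : Monotone i
  · rw [tupleInv_eq_zero_of_monotone hi, Tuple.sort_eq_refl_iff_monotone.2 hi]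
    simp
  obtain ⟨s, t, hst, hlt⟩ : ∃ s t : Fin n, s ⋖ t ∧ i t < i s := by
    simpa only [monotone_iff_forall_covBy, not_forall, not_le, exists_prop] using hi
  have hinv : tupleInv i = tupleInv (i ∘ swap s t) + 1 := by
    simpa [comp_def] using tupleInv_comp_swap (f := i ∘ swap s t) hst (by simpa using hlt)
  rw [qdet_submatrix_comp_swap hq hX hst hlt,
    qdet_submatrix_eq_mul_qdet_sort hq hX (i ∘ swap s t), Tuple.comp_perm_comp_sort_eq_comp_sort,
    hinv, neg_zpow_neg_natCast_succ, ← mul_assoc]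
  congr 1
  exact (Commute.refl _).units_inv_left.units_zpow_right _
termination_by tupleInv i
decreasing_by omega

lemma qdet_submatrix_eq_zero_of_not_injective (hq : ∀ a k, Commute (q : R) (X a k))
    (hX : qGeneric q X) {i : Fin n → Fin m} (hi : ¬Injective i) :
    qdet q (X.submatrix i id) = 0 := by
  have sorted_not_strictMono : ¬StrictMono (i ∘ Tuple.sort i) := fun h =>
    hi ((Injective.of_comp_iff' i (Tuple.sort i).bijective).1 h.injective)
  rw [strictMono_iff_forall_covBy] at sorted_not_strictMono
  push Not at sorted_not_strictMono
  obtain ⟨s, t, hst, hle⟩ := sorted_not_strictMono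
  have heq := (Tuple.monotone_sort i hst.le).antisymm hle
  rw [qdet_submatrix_eq_mul_qdet_sort hq hX i, qdet_submatrix_eq_zero_of_covBy hq hX hst heq,
    mul_zero]

end Rows

theorem stmt5_general {R : Type*} [Ring R] {q : Rˣ} {m n : ℕ} {X : Matrix (Fin m) (Fin n) R}
    (hq : ∀ a k, Commute (q : R) (X a k)) (hX : qGeneric q X) (i : Fin n → Fin m) :
    qdet q (X.submatrix i id) =
        (((-q) ^ (-(tupleInv i : ℤ)) : Rˣ) : R) * qdet q (X.submatrix (i ∘ Tuple.sort i) id) ∧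
      (¬Injective i → qdet q (X.submatrix i id) = 0) :=
  ⟨qdet_submatrix_eq_mul_qdet_sort hq hX i, qdet_submatrix_eq_zero_of_not_injective hq hX⟩

/-- The `q`-alternating property: if `A` is built by choosing rows
`i 0, …, i (n-1)` of a `q`-generic `n×n` matrix `X`, then `det_q A = (-q)^{-ℓ(i)} det_q X`
when the chosen rows are pairwise distinct, and `det_q A = 0` otherwise. -/
theorem stmt5 {R : Type*} [Ring R] (q : Rˣ) (hq : ∀ r : R, (q : R) * r = r * (q : R))
    {n : ℕ} (X : Matrix (Fin n) (Fin n) R) (hX : qGeneric q X) (i : Fin n → Fin n) :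
    (Function.Injective i →
      qdet q (Matrix.of fun s t => X (i s) t) =
        (((-q) ^ (-(tupleInv i : ℤ)) : Rˣ) : R) * qdet q X) ∧
    (¬ Function.Injective i → qdet q (Matrix.of fun s t => X (i s) t) = 0) := by
  obtain ⟨sorted, vanishing⟩ := stmt5_general (fun a k => hq (X a k)) hX i
  exact ⟨fun hi => by rwa [comp_sort_eq_id_of_injective hi] at sorted, vanishing⟩
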